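/- For every real C ≥ 1, every θ with 0 ≤ θ ≤ π, and all ℓ, ℓ' ≥ 0, one has D_θ(C·ℓ, C·ℓ') ≥ C · D_θ(ℓ, ℓ'). -/

import Mathlib

/-- Inverse hyperbolic cosine. -/
noncomputable def arcosh (x : ℝ) : ℝ := Real.log (x + Real.sqrt (x ^ 2 - 1))

/-- `D θ ℓ ℓ'` is the distance, in the hyperbolic plane of curvature `-1`, between the far
endpoints of two geodesic segments of lengths `ℓ, ℓ'` issuing from a common vertex at
angle `θ`. -/
noncomputable def D (θ ℓ ℓ' : ℝ) : ℝ :=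
  arcosh (Real.cosh ℓ * Real.cosh ℓ' - Real.sinh ℓ * Real.sinh ℓ' * Real.cos θ)

/-!
The function `cosh (C * arcosh x)` is convex on `[1, ∞)`: in the variable `t = arcosh x` its
derivative is `C * sinh (C * t) / sinh t`, which increases with `t` when `C ≥ 1`. The law of cosines
writes `cosh (D θ ℓ ℓ')` as a convex combination of `cosh (ℓ - ℓ')` and `cosh (ℓ + ℓ')` with weights
depending only on `θ`. Jensen's inequality for this combination says exactly that
`cosh (C * D θ ℓ ℓ') ≤ cosh (D θ (C * ℓ) (C * ℓ'))`.
-/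

open Set
open Real hiding arcosh

theorem sinh_mul_mul_cosh_le {C t : ℝ} (hC : 1 ≤ C) (ht : 0 ≤ t) :
    sinh (C * t) * cosh t ≤ C * cosh (C * t) * sinh t := by
  let f : ℝ → ℝ := fun x ↦ C * cosh (C * x) * sinh x - sinh (C * x) * cosh x
  have hf (x : ℝ) : HasDerivAt f ((C ^ 2 - 1) * (sinh (C * x) * sinh x)) x := by
    have hCx : HasDerivAt (fun x ↦ C * x) C x := hasDerivAt_const_mul C
    exact (((hCx.cosh.const_mul C).mul (hasDerivAt_sinh x)).sub
      (hCx.sinh.mul (hasDerivAt_cosh x))).congr_deriv (by ring)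
  have hf_mono : MonotoneOn f (Ici 0) := by
    refine monotoneOn_of_hasDerivWithinAt_nonneg (convex_Ici 0)
      (fun x _ ↦ (hf x).continuousAt.continuousWithinAt)
      (fun x _ ↦ (hf x).hasDerivWithinAt) fun x hx ↦ ?_
    have hx : 0 ≤ x := interior_subset hx
    have hC2 : 0 ≤ C ^ 2 - 1 := sub_nonneg.2 (one_le_pow₀ hC)
    positivity
  have hf_nonneg : f 0 ≤ f t := hf_mono self_mem_Ici ht ht
  simpa [f] using hf_nonneg

theorem monotoneOn_sinh_mul_div_sinh {C : ℝ} (hC : 1 ≤ C) :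
    MonotoneOn (fun t ↦ sinh (C * t) / sinh t) (Ioi 0) := by
  have hderiv {t : ℝ} (ht : 0 < t) : HasDerivAt (fun t ↦ sinh (C * t) / sinh t)
      ((C * cosh (C * t) * sinh t - sinh (C * t) * cosh t) / sinh t ^ 2) t :=
    ((hasDerivAt_const_mul C).sinh.div (hasDerivAt_sinh t) (sinh_pos_iff.2 ht).ne').congr_deriv
      (by ring)
  refine monotoneOn_of_hasDerivWithinAt_nonneg (convex_Ioi 0)
    (fun t ht ↦ (hderiv ht).continuousAt.continuousWithinAt)
    (fun t ht ↦ (hderiv (interior_subset ht)).hasDerivWithinAt) fun t ht ↦ ?_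
  have ht : 0 < t := interior_subset ht
  exact div_nonneg (sub_nonneg.2 (sinh_mul_mul_cosh_le hC ht.le)) (sq_nonneg _)

theorem hasDerivAt_cosh_mul_arcosh (C : ℝ) {x : ℝ} (hx : 1 < x) :
    HasDerivAt (fun x ↦ cosh (C * Real.arcosh x))
      (C * (sinh (C * Real.arcosh x) / sinh (Real.arcosh x))) x := by
  refine ((hasDerivAt_arcosh hx).const_mul C).cosh.congr_deriv ?_
  rw [sinh_arcosh hx.le]
  ring

theorem convexOn_cosh_mul_arcosh {C : ℝ} (hC : 1 ≤ C) :
    ConvexOn ℝ (Ici 1) (fun x ↦ cosh (C * Real.arcosh x)) := by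
  refine MonotoneOn.convexOn_of_deriv (convex_Ici 1)
    (continuous_cosh.comp_continuousOn (continuousOn_const.mul continuousOn_arcosh)) ?_ ?_
  all_goals rw [interior_Ici]
  · exact fun x hx ↦ (hasDerivAt_cosh_mul_arcosh C hx).differentiableAt.differentiableWithinAt
  · intro x (hx : 1 < x) y (hy : 1 < y) hxy
    rw [(hasDerivAt_cosh_mul_arcosh C hx).deriv, (hasDerivAt_cosh_mul_arcosh C hy).deriv]
    have harcosh : Real.arcosh x ≤ Real.arcosh y :=
      (arcosh_le_arcosh (by positivity) (by positivity)).2 hxy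
    exact mul_le_mul_of_nonneg_left
      (monotoneOn_sinh_mul_div_sinh hC (arcosh_pos hx) (arcosh_pos hy) harcosh) (by positivity)

theorem cosh_mul_arcosh_cosh (C u : ℝ) : cosh (C * Real.arcosh (cosh u)) = cosh (C * u) := by
  rw [← cosh_abs u, arcosh_cosh (abs_nonneg u), ← cosh_abs, abs_mul, abs_abs, ← abs_mul, cosh_abs]

theorem cosh_mul_cosh_sub_sinh_mul_sinh_mul_cos (θ a b : ℝ) :
    cosh a * cosh b - sinh a * sinh b * cos θ =
      (1 + cos θ) / 2 * cosh (a - b) + (1 - cos θ) / 2 * cosh (a + b) := by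
  rw [cosh_sub, cosh_add]
  ring

theorem one_le_cosh_mul_cosh_sub_sinh_mul_sinh_mul_cos (θ a b : ℝ) :
    1 ≤ cosh a * cosh b - sinh a * sinh b * cos θ := by
  have hp : 0 ≤ 1 + cos θ := by linarith [neg_one_le_cos θ]
  have hq : 0 ≤ 1 - cos θ := by linarith [cos_le_one θ]
  calc
    1 = (1 + cos θ) / 2 * 1 + (1 - cos θ) / 2 * 1 := by ring
    _ ≤ (1 + cos θ) / 2 * cosh (a - b) + (1 - cos θ) / 2 * cosh (a + b) := by
      gcongr <;> exact one_le_cosh _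
    _ = _ := (cosh_mul_cosh_sub_sinh_mul_sinh_mul_cos θ a b).symm

theorem D_eq_real_arcosh (θ ℓ ℓ' : ℝ) :
    D θ ℓ ℓ' = Real.arcosh (cosh ℓ * cosh ℓ' - sinh ℓ * sinh ℓ' * cos θ) :=
  rfl

theorem D_nonneg (θ ℓ ℓ' : ℝ) : 0 ≤ D θ ℓ ℓ' := by
  rw [D_eq_real_arcosh]
  exact arcosh_nonneg (one_le_cosh_mul_cosh_sub_sinh_mul_sinh_mul_cos θ ℓ ℓ')

theorem cosh_D (θ ℓ ℓ' : ℝ) :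
    cosh (D θ ℓ ℓ') = (1 + cos θ) / 2 * cosh (ℓ - ℓ') + (1 - cos θ) / 2 * cosh (ℓ + ℓ') := by
  rw [D_eq_real_arcosh, cosh_arcosh (one_le_cosh_mul_cosh_sub_sinh_mul_sinh_mul_cos θ ℓ ℓ'),
    cosh_mul_cosh_sub_sinh_mul_sinh_mul_cos]

theorem cosh_mul_D_le {C : ℝ} (hC : 1 ≤ C) (θ ℓ ℓ' : ℝ) :
    cosh (C * D θ ℓ ℓ') ≤ cosh (D θ (C * ℓ) (C * ℓ')) := by
  have hp : 0 ≤ (1 + cos θ) / 2 := by linarith [neg_one_le_cos θ]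
  have hq : 0 ≤ (1 - cos θ) / 2 := by linarith [cos_le_one θ]
  have jensen := (convexOn_cosh_mul_arcosh hC).2 (one_le_cosh (ℓ - ℓ')) (one_le_cosh (ℓ + ℓ'))
    hp hq (by ring)
  simp only [smul_eq_mul, ← cosh_D, cosh_mul_arcosh_cosh] at jensen
  calc
    cosh (C * D θ ℓ ℓ')
      ≤ (1 + cos θ) / 2 * cosh (C * (ℓ - ℓ')) + (1 - cos θ) / 2 * cosh (C * (ℓ + ℓ')) := jensen
    _ = cosh (D θ (C * ℓ) (C * ℓ')) := by rw [cosh_D, mul_sub, mul_add]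

theorem stmt_2_general {C : ℝ} (hC : 1 ≤ C) (θ ℓ ℓ' : ℝ) :
    C * D θ ℓ ℓ' ≤ D θ (C * ℓ) (C * ℓ') := by
  have habs : |C * D θ ℓ ℓ'| ≤ |D θ (C * ℓ) (C * ℓ')| := cosh_le_cosh.1 (cosh_mul_D_le hC θ ℓ ℓ')
  rw [abs_of_nonneg (D_nonneg θ (C * ℓ) (C * ℓ'))] at habs
  exact (le_abs_self _).trans habs

theorem stmt_2 (C θ ℓ ℓ' : ℝ) (hC : 1 ≤ C) (hθ0 : 0 ≤ θ) (hθπ : θ ≤ Real.pi)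
    (hℓ : 0 ≤ ℓ) (hℓ' : 0 ≤ ℓ') :
    C * D θ ℓ ℓ' ≤ D θ (C * ℓ) (C * ℓ') :=
  stmt_2_general hC θ ℓ ℓ'
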